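/- arXiv:2507.15616 — 2 statements merged into one kernel-verified Lean document; each statement's English description precedes it below -/
import Mathlib

section
/- Let ψ : [−1,1] → ℝ be infinitely differentiable, and suppose φ := ψ + h has a unique global maximizer m* on [−1,1], that m* ∈ (−1,1), and that φ''(m*) = −ε for some ε > 0. Define Z_ψ^{(n)} = 2^{-n} Σ_{σ∈{−1,1}^n} exp(n·ψ(⟨σ,1⟩/n)). Then limsup_{n→∞} ( log Z_ψ^{(n)} − n·φ(m*) ) ≤ (3/2)·log(1/(1−(m*)²)) + (1/2)·log(1/ε). -/
/-!
Laplace's method with sharp constants. Grouping configurations by the number `k` of `+1` spins,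
`Z_ψ` is a sum over `k ≤ n` of `2⁻ⁿ * n.choose k * exp (n ψ(m_k))` with `m_k = (2k - n) / n`.

* The binomial theorem gives `2⁻ⁿ * n.choose k ≤ exp (n h(m_k))` for all `k`. Since `φ` stays below
  `φ(m*) - η` at distance at least `δ` from `m*`, the far terms contribute at most
  `(n + 1) exp (-n η)` relative to `exp (n φ(m*))`.
* Stirling's formula improves this to a factor `(1 + o(1)) √(2 / (π n q))` when `1 - m_k² ≥ q`.
  By the second derivative test `φ(m) ≤ φ(m*) - (a / 2) (m - m*)²` near `m*` for each `a < ε`, and a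
  Gaussian sum with parameter `b = 2a / n` is at most `2 + √(π / b)`.

Together, `Z_ψ exp (-n φ(m*))` is bounded by a sequence tending to `1 / √(a q)`, for any `a < ε` and
`q < 1 - m*²`. This yields even `(1/2) log (1 / (1 - m*²))` in place of `(3/2) log (1 / (1 - m*²))`,
the difference being nonnegative.
-/

open Filter

/-- The value `±1` of a Boolean spin. -/
noncomputable def spin (b : Bool) : ℝ := if b then 1 else -1

/-- The magnetization `⟨σ, 1⟩ = Σ_i σ_i` of a spin configuration. -/
noncomputable def mag {n : ℕ} (σ : Fin n → Bool) : ℝ := ∑ i, spin (σ i)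

/-- The entropy function
`h(m) = -(1/2)((1-m)log(1-m) + (1+m)log(1+m))` (with `0·log 0 = 0`). -/
noncomputable def entH (m : ℝ) : ℝ :=
  -(1 / 2) * ((1 - m) * Real.log (1 - m) + (1 + m) * Real.log (1 + m))

/-- The one-dimensional partition function
`Z_ψ^{(n)} = 2^{-n} Σ_{σ ∈ {±1}^n} exp(n·ψ(⟨σ,1⟩/n))`. -/
noncomputable def Zpsi (n : ℕ) (ψ : ℝ → ℝ) : ℝ :=
  (2 : ℝ) ^ (-(n : ℤ)) * ∑ σ : Fin n → Bool, Real.exp (n * ψ (mag σ / n))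

/-! ### Grouping configurations by magnetization -/

theorem mag_eq {n : ℕ} (σ : Fin n → Bool) :
    mag σ = 2 * ((Finset.univ.filter fun i => σ i = true).card : ℝ) - n := by
  have h : ∀ i, spin (σ i) = 2 * (if σ i = true then (1 : ℝ) else 0) - 1 := by
    intro i
    unfold spin
    split_ifs <;> norm_num
  simp only [mag, h, Finset.sum_sub_distrib, ← Finset.mul_sum, Finset.sum_boole]
  simp

theorem Zpsi_eq (n : ℕ) (ψ : ℝ → ℝ) :
    Zpsi n ψ = ∑ k ∈ Finset.range (n + 1),
      (2 : ℝ) ^ (-(n : ℤ)) * (n.choose k * Real.exp (n * ψ ((2 * k - n) / n))) := by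
  have key : ∑ σ : Fin n → Bool, Real.exp (n * ψ (mag σ / n)) =
      ∑ s ∈ (Finset.univ : Finset (Fin n)).powerset,
        Real.exp (n * ψ ((2 * (s.card : ℝ) - n) / n)) := by
    refine Finset.sum_bij' (fun σ _ => Finset.univ.filter fun i => σ i = true)
      (fun s _ => fun i => decide (i ∈ s)) ?_ ?_ ?_ ?_ ?_
    · simp
    · simp
    · intro σ _
      ext i
      simp
    · intro s _
      ext i
      simp
    · intro σ _
      rw [mag_eq]
  rw [Zpsi, key, Finset.sum_powerset_apply_card
    (fun k => Real.exp (n * ψ ((2 * (k : ℝ) - n) / n))), Finset.mul_sum]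
  simp [nsmul_eq_mul]

/-! ### Binomial weights and entropy -/

/-- With `0 ^ 0 = 1` and `0 * log 0 = 0` this also covers `k = 0` and `j = 0`. -/
theorem exp_entH (k j : ℕ) (hn : 0 < k + j) :
    (2 : ℝ) ^ (-((k + j : ℕ) : ℤ)) * ((k + j : ℕ) : ℝ) ^ (k + j) =
      ((k : ℝ) ^ k * (j : ℝ) ^ j) *
        Real.exp ((k + j : ℕ) * entH ((2 * k - (k + j : ℕ)) / (k + j : ℕ))) := by
  have hn' : (0 : ℝ) < k + j := by exact_mod_cast hn
  have hpow : ∀ (i : ℕ), (2 * i / (k + j) : ℝ) ^ i =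
      Real.exp (i * Real.log (2 * i / (k + j))) := by
    intro i
    rcases Nat.eq_zero_or_pos i with rfl | hi
    · simp
    · have : (0 : ℝ) < i := by exact_mod_cast hi
      rw [Real.exp_nat_mul, Real.exp_log (by positivity)]
  have h1 : 1 - (2 * (k : ℝ) - (k + j)) / (k + j) = 2 * j / (k + j) := by
    field_simp; ring
  have h2 : 1 + (2 * (k : ℝ) - (k + j)) / (k + j) = 2 * k / (k + j) := by
    field_simp; ring
  have h3 : ((k : ℝ) + j) * entH ((2 * k - (k + j)) / (k + j)) =
      -(j * Real.log (2 * j / (k + j)) + k * Real.log (2 * k / (k + j))) := by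
    rw [entH, h1, h2]
    field_simp
  have hpos : ∀ i : ℕ, (0 : ℝ) < (i : ℝ) ^ i := by
    intro i
    rcases Nat.eq_zero_or_pos i with rfl | hi
    · simp
    · positivity
  push_cast
  rw [h3, Real.exp_neg, Real.exp_add, ← hpow, ← hpow]
  have hk := hpos k
  have hj := hpos j
  rw [div_pow, div_pow, mul_pow, mul_pow]
  rw [zpow_neg, show ((k : ℤ) + j) = ((k + j : ℕ) : ℤ) by push_cast; rfl, zpow_natCast]
  field_simp
  ring

theorem choose_le (k j : ℕ) :
    ((k + j).choose k : ℝ) * ((k : ℝ) ^ k * (j : ℝ) ^ j) ≤ ((k + j : ℕ) : ℝ) ^ (k + j) := by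
  push_cast
  rw [add_pow]
  have := Finset.single_le_sum (s := Finset.range (k + j + 1))
    (f := fun m => (k : ℝ) ^ m * (j : ℝ) ^ (k + j - m) * ((k + j).choose m : ℝ))
    (fun i _ => by positivity) (a := k) (by simp)
  simp only [Nat.add_sub_cancel_left] at this
  linarith

theorem choose_stirling (k j : ℕ) (hk : 0 < k) (hj : 0 < j) :
    ((k + j).choose k : ℝ) * ((k : ℝ) ^ k * (j : ℝ) ^ j) ≤
      Stirling.stirlingSeq (k + j) / √Real.pi *
        √((k + j : ℕ) / (2 * Real.pi * (k * j))) * ((k + j : ℕ) : ℝ) ^ (k + j) := by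
  have hfac : ((k + j).choose k : ℝ) * (k.factorial * j.factorial) = (k + j).factorial := by
    have := Nat.add_choose_mul_factorial_mul_factorial k j
    rw [Nat.choose_symm_add]
    rw [← mul_assoc]
    exact_mod_cast this
  have hk' : (0 : ℝ) < k := by exact_mod_cast hk
  have hj' : (0 : ℝ) < j := by exact_mod_cast hj
  have hπ := Real.pi_pos
  have hn : ((k + j).factorial : ℝ) = Stirling.stirlingSeq (k + j) *
      (√(2 * (k + j : ℕ)) * ((k + j : ℕ) / Real.exp 1) ^ (k + j)) := by
    rw [Stirling.stirlingSeq]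
    push_cast
    field_simp
  have hprod := mul_le_mul (Stirling.le_factorial_stirling k) (Stirling.le_factorial_stirling j)
    (by positivity) (by positivity)
  have h1 := mul_le_mul_of_nonneg_left hprod (Nat.cast_nonneg (α := ℝ) ((k + j).choose k))
  rw [hfac, hn] at h1
  have hsq : √(2 * (k + j : ℕ)) =
      √((k + j : ℕ) / (2 * Real.pi * (k * j))) / √Real.pi *
        (√(2 * Real.pi * k) * √(2 * Real.pi * j)) := by
    rw [← Real.sqrt_div (by positivity), ← Real.sqrt_mul (by positivity),
      ← Real.sqrt_mul (by positivity)]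
    congr 1
    field_simp
  rw [hsq] at h1
  have hE := Real.exp_pos 1
  have hA : 0 < √(2 * Real.pi * k) * √(2 * Real.pi * j) := by positivity
  have hEE : 0 < (Real.exp 1) ^ (k + j) := by positivity
  set A := √(2 * Real.pi * k) * √(2 * Real.pi * j)
  have h2 : ((k + j).choose k : ℝ) * ((k : ℝ) ^ k * (j : ℝ) ^ j) *
      (A / (Real.exp 1) ^ (k + j)) ≤
      (Stirling.stirlingSeq (k + j) / √Real.pi *
        √((k + j : ℕ) / (2 * Real.pi * (k * j))) * ((k + j : ℕ) : ℝ) ^ (k + j)) *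
      (A / (Real.exp 1) ^ (k + j)) := by
    refine le_trans (le_of_eq ?_) (h1.trans (le_of_eq ?_))
    · simp only [A, div_pow, pow_add]
      field_simp
    · rw [div_pow]
      field_simp
  exact le_of_mul_le_mul_right h2 (by positivity)

/-! ### Gaussian sums over integers -/

theorem sum_gauss_range (b : ℝ) (hb : 0 < b) (N : ℕ) :
    ∑ i ∈ Finset.range N, Real.exp (-b * (i : ℝ) ^ 2) ≤ 1 + √(Real.pi / b) / 2 := by
  have hanti : AntitoneOn (fun x : ℝ => Real.exp (-b * x ^ 2)) (Set.Icc 0 (0 + (N : ℕ))) := by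
    intro x hx y hy hxy
    have : x ^ 2 ≤ y ^ 2 := pow_le_pow_left₀ hx.1 hxy 2
    apply Real.exp_le_exp.mpr
    nlinarith
  have h1 := hanti.sum_le_integral
  have h2 : ∫ x in (0 : ℝ)..0 + N, Real.exp (-b * x ^ 2) ≤
      ∫ x in Set.Ioi (0 : ℝ), Real.exp (-b * x ^ 2) := by
    rw [intervalIntegral.integral_of_le (by simp)]
    exact MeasureTheory.setIntegral_mono_set (integrable_exp_neg_mul_sq hb).integrableOn
      (Eventually.of_forall fun x => (Real.exp_pos _).le)
      (Set.Ioc_subset_Ioi_self.eventuallyLE)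
  rw [integral_gaussian_Ioi] at h2
  have h3 : ∑ i ∈ Finset.range N, Real.exp (-b * (i : ℝ) ^ 2) ≤
      ∑ i ∈ Finset.range (N + 1), Real.exp (-b * (i : ℝ) ^ 2) :=
    Finset.sum_le_sum_of_subset_of_nonneg (Finset.range_subset_range.mpr (by omega))
      fun i _ _ => (Real.exp_pos _).le
  rw [Finset.sum_range_succ'] at h3
  simp only [zero_add] at h1 h2
  have h4 : Real.exp (-b * ((0 : ℕ) : ℝ) ^ 2) = 1 := by simp
  linarith

/-- Points mapped injectively to naturals `g k` with `g k ≤ |k - c|` see at most half a Gaussian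
sum. -/
theorem sum_gauss_half (b : ℝ) (hb : 0 < b) (c : ℝ) (s : Finset ℕ) (g : ℕ → ℕ)
    (hg : Set.InjOn g s) (h : ∀ k ∈ s, ((g k : ℕ) : ℝ) ≤ |(k : ℝ) - c|) :
    ∑ k ∈ s, Real.exp (-b * ((k : ℝ) - c) ^ 2) ≤ 1 + √(Real.pi / b) / 2 := by
  calc ∑ k ∈ s, Real.exp (-b * ((k : ℝ) - c) ^ 2)
      ≤ ∑ k ∈ s, Real.exp (-b * ((g k : ℕ) : ℝ) ^ 2) := by
        refine Finset.sum_le_sum fun k hk => Real.exp_le_exp.mpr ?_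
        have := pow_le_pow_left₀ (Nat.cast_nonneg _) (h k hk) 2
        rw [sq_abs] at this
        nlinarith
    _ = ∑ i ∈ s.image g, Real.exp (-b * (i : ℝ) ^ 2) :=
        (Finset.sum_image (f := fun i : ℕ => Real.exp (-b * (i : ℝ) ^ 2)) hg).symm
    _ ≤ ∑ i ∈ Finset.range ((s.image g).sup id + 1), Real.exp (-b * (i : ℝ) ^ 2) :=
        Finset.sum_le_sum_of_subset_of_nonneg (Finset.subset_range_sup_succ _)
          fun i _ _ => (Real.exp_pos _).le
    _ ≤ _ := sum_gauss_range b hb _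

theorem sum_gauss (b : ℝ) (hb : 0 < b) (c : ℝ) (s : Finset ℕ) :
    ∑ k ∈ s, Real.exp (-b * ((k : ℝ) - c) ^ 2) ≤ 2 + √(Real.pi / b) := by
  rw [← Finset.sum_filter_add_sum_filter_not s (fun k : ℕ => ⌈c⌉ ≤ (k : ℤ))]
  have h1 := sum_gauss_half b hb c (s.filter fun k : ℕ => ⌈c⌉ ≤ (k : ℤ))
    (fun k => ((k : ℤ) - ⌈c⌉).toNat) (by
      intro x hx y hy hxy
      simp at hx hy hxy
      omega) (by
      intro k hk
      have hk' := (Finset.mem_filter.mp hk).2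
      have h3 : ((((k : ℤ) - ⌈c⌉).toNat : ℕ) : ℝ) = (k : ℝ) - ⌈c⌉ := by
        have : ((((k : ℤ) - ⌈c⌉).toNat : ℕ) : ℤ) = (k : ℤ) - ⌈c⌉ := Int.toNat_of_nonneg (by omega)
        exact_mod_cast congrArg (Int.cast (R := ℝ)) this
      rw [h3]
      exact le_trans (by linarith [Int.le_ceil c]) (le_abs_self _))
  have h2 := sum_gauss_half b hb c (s.filter fun k : ℕ => ¬ ⌈c⌉ ≤ (k : ℤ))
    (fun k => (⌈c⌉ - 1 - (k : ℤ)).toNat) (by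
      intro x hx y hy hxy
      simp only [Finset.coe_filter, Set.mem_ofPred_eq] at hx hy
      simp only at hxy
      omega) (by
      intro k hk
      have hk' := (Finset.mem_filter.mp hk).2
      have h3 : (((⌈c⌉ - 1 - (k : ℤ)).toNat : ℕ) : ℝ) = (⌈c⌉ : ℝ) - 1 - k := by
        have : (((⌈c⌉ - 1 - (k : ℤ)).toNat : ℕ) : ℤ) = ⌈c⌉ - 1 - (k : ℤ) :=
          Int.toNat_of_nonneg (by omega)
        exact_mod_cast congrArg (Int.cast (R := ℝ)) this
      rw [h3]
      exact le_trans (by linarith [Int.ceil_lt_add_one c]) (neg_le_abs _))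
  linarith

/-! ### The maximizer of `φ` -/

theorem continuous_entH : Continuous entH := by
  have h := Real.continuous_mul_log
  have h1 : Continuous fun m : ℝ => (1 - m) * Real.log (1 - m) :=
    h.comp (continuous_const.sub continuous_id)
  have h2 : Continuous fun m : ℝ => (1 + m) * Real.log (1 + m) :=
    h.comp (continuous_const.add continuous_id)
  exact continuous_const.mul (h1.add h2)

theorem differentiableAt_entH {m : ℝ} (hm : m ∈ Set.Ioo (-1 : ℝ) 1) :
    DifferentiableAt ℝ entH m := by
  have h1 : (1 - m) ≠ 0 := by linarith [hm.2]
  have h2 : (1 + m) ≠ 0 := by linarith [hm.1]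
  unfold entH
  fun_prop (disch := assumption)

/-- Second derivative test applied to `x ↦ φ x + a / 2 * (x - m) ^ 2`. -/
theorem quad_bound (φ : ℝ → ℝ) (m ε a : ℝ) (ha : a < ε) (hε : 0 < ε)
    (hd : ∀ᶠ x in nhds m, DifferentiableAt ℝ φ x) (hloc : IsLocalMax φ m)
    (hsec : deriv (deriv φ) m = -ε) :
    ∀ᶠ x in nhds m, φ x ≤ φ m - a / 2 * (x - m) ^ 2 := by
  have hq : ∀ x, HasDerivAt (fun x => a / 2 * (x - m) ^ 2) (a * (x - m)) x := by
    intro x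
    have := (((hasDerivAt_id x).sub_const m).pow 2).const_mul (a / 2)
    refine this.congr_deriv ?_
    simp
    ring
  have hder : deriv (fun x => φ x + a / 2 * (x - m) ^ 2) =ᶠ[nhds m]
      fun x => deriv φ x + a * (x - m) := by
    filter_upwards [hd] with x hx
    exact (hx.hasDerivAt.add (hq x)).deriv
  have hdd : DifferentiableAt ℝ (deriv φ) m :=
    differentiableAt_of_deriv_ne_zero (by rw [hsec]; linarith)
  have hlin : HasDerivAt (fun x => a * (x - m)) a m := by
    simpa using ((hasDerivAt_id m).sub_const m).const_mul a
  have hd2 : deriv (deriv (fun x => φ x + a / 2 * (x - m) ^ 2)) m = -ε + a := by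
    rw [hder.deriv_eq, ← hsec]
    exact (hdd.hasDerivAt.add hlin).deriv
  have hd1 : deriv (fun x => φ x + a / 2 * (x - m) ^ 2) m = 0 := by
    rw [hder.eq_of_nhds, hloc.deriv_eq_zero]
    simp
  have hmax := isLocalMax_of_deriv_deriv_neg (by rw [hd2]; linarith) hd1
    (hd.self_of_nhds.continuousAt.add (hq m).continuousAt)
  filter_upwards [hmax] with x hx
  simp at hx
  linarith

theorem gap (φ : ℝ → ℝ) (m δ : ℝ) (hδ : 0 < δ) (hc : ContinuousOn φ (Set.Icc (-1) 1))
    (hmax : ∀ x ∈ Set.Icc (-1 : ℝ) 1, x ≠ m → φ x < φ m) :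
    ∃ η > 0, ∀ x ∈ Set.Icc (-1 : ℝ) 1, δ ≤ |x - m| → φ x ≤ φ m - η := by
  have hK : IsCompact (Set.Icc (-1 : ℝ) 1 ∩ {x | δ ≤ |x - m|}) :=
    isCompact_Icc.inter_right (isClosed_le continuous_const (by fun_prop))
  rcases (Set.Icc (-1 : ℝ) 1 ∩ {x | δ ≤ |x - m|}).eq_empty_or_nonempty with he | hne
  · refine ⟨1, one_pos, fun x hx hxm => ?_⟩
    have : x ∈ (Set.Icc (-1 : ℝ) 1 ∩ {x | δ ≤ |x - m|}) := ⟨hx, hxm⟩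
    simp [he] at this
  · obtain ⟨y, hy, hym⟩ := hK.exists_isMaxOn hne (hc.mono Set.inter_subset_left)
    have hyne : y ≠ m := by
      rintro rfl
      have : δ ≤ |y - y| := hy.2
      simp at this
      linarith
    refine ⟨φ m - φ y, by linarith [hmax y hy.1 hyne], fun x hx hxm => ?_⟩
    have := hym (show x ∈ _ from ⟨hx, hxm⟩)
    simp at this
    linarith

/-! ### Termwise bound and limit -/

/-- Each term of `Z_ψ exp (-n φ(m*))` is either Gaussian-dominated (near `m*`) or exponentially
small (away from `m*`); the bound adds both alternatives. -/
theorem term_bound (ψ φ : ℝ → ℝ) (hφ : ∀ m, φ m = ψ m + entH m) (ms δ a q η : ℝ)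
    (hq : 0 < q)
    (hnear : ∀ x, |x - ms| < δ → φ x ≤ φ ms - a / 2 * (x - ms) ^ 2 ∧ q ≤ 1 - x ^ 2)
    (hfar : ∀ x ∈ Set.Icc (-1 : ℝ) 1, δ ≤ |x - ms| → φ x ≤ φ ms - η)
    (n : ℕ) (hn : 0 < n) (k : ℕ) (hk : k ≤ n) :
    (2 : ℝ) ^ (-(n : ℤ)) * (n.choose k * Real.exp (n * ψ ((2 * k - n) / n))) *
        Real.exp (-(n * φ ms)) ≤
      Stirling.stirlingSeq n / √Real.pi * √(2 / (Real.pi * n * q)) *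
        Real.exp (-(2 * a / n) * ((k : ℝ) - n * (1 + ms) / 2) ^ 2) + Real.exp (-η) ^ n := by
  obtain ⟨j, rfl⟩ := Nat.exists_eq_add_of_le hk
  have hent := exp_entH k j hn
  have hnR : (0 : ℝ) < ((k + j : ℕ) : ℝ) := by exact_mod_cast hn
  have hcast : ((k + j : ℕ) : ℝ) = k + j := by push_cast; rfl
  set n := k + j with hndef
  set x : ℝ := (2 * k - (n : ℝ)) / n with hx
  have hpos : ∀ i : ℕ, (0 : ℝ) < (i : ℝ) ^ i := by
    intro i
    rcases Nat.eq_zero_or_pos i with rfl | hi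
    · simp
    · positivity
  have hP : 0 < (k : ℝ) ^ k * (j : ℝ) ^ j := mul_pos (hpos k) (hpos j)
  set P := (k : ℝ) ^ k * (j : ℝ) ^ j
  have h2 : (0 : ℝ) < (2 : ℝ) ^ (-(n : ℤ)) := by positivity
  -- A bound `C` on the ratio of the binomial weight to `exp (n h)` turns `ψ` into `φ`.
  have conv : ∀ C : ℝ, (n.choose k : ℝ) * P ≤ C * (n : ℝ) ^ n →
      (2 : ℝ) ^ (-(n : ℤ)) * (n.choose k * Real.exp (n * ψ x)) * Real.exp (-(n * φ ms)) ≤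
        C * Real.exp (n * (φ x - φ ms)) := by
    intro C hC
    have h3 : (2 : ℝ) ^ (-(n : ℤ)) * n.choose k ≤ C * Real.exp (n * entH x) := by
      refine le_of_mul_le_mul_right ?_ hP
      calc (2 : ℝ) ^ (-(n : ℤ)) * n.choose k * P
          = (2 : ℝ) ^ (-(n : ℤ)) * (n.choose k * P) := by ring
        _ ≤ (2 : ℝ) ^ (-(n : ℤ)) * (C * (n : ℝ) ^ n) := by gcongr
        _ = C * ((2 : ℝ) ^ (-(n : ℤ)) * (n : ℝ) ^ n) := by ring
        _ = C * Real.exp (n * entH x) * P := by rw [hent]; ring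
    calc _ = ((2 : ℝ) ^ (-(n : ℤ)) * n.choose k) *
          (Real.exp (n * ψ x) * Real.exp (-(n * φ ms))) := by ring
      _ ≤ (C * Real.exp (n * entH x)) * (Real.exp (n * ψ x) * Real.exp (-(n * φ ms))) := by
          gcongr
      _ = C * Real.exp (n * (φ x - φ ms)) := by
          rw [mul_assoc, ← Real.exp_add, ← Real.exp_add, hφ x]
          congr 2
          ring
  have hS : 0 ≤ Stirling.stirlingSeq n := by
    rw [Stirling.stirlingSeq]; positivity
  have hfirst : 0 ≤ Stirling.stirlingSeq n / √Real.pi * √(2 / (Real.pi * n * q)) *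
        Real.exp (-(2 * a / n) * ((k : ℝ) - n * (1 + ms) / 2) ^ 2) := by positivity
  have hk0 : (0 : ℝ) ≤ k := Nat.cast_nonneg k
  have hj0 : (0 : ℝ) ≤ j := Nat.cast_nonneg j
  rcases lt_or_ge |x - ms| δ with hlt | hge
  · obtain ⟨hb, hqx⟩ := hnear x hlt
    have hkj : (k : ℝ) * j = n ^ 2 * (1 - x ^ 2) / 4 := by
      rw [hx, hcast]
      rw [hcast] at hnR
      field_simp
      ring
    have hkj' : n ^ 2 * q / 4 ≤ (k : ℝ) * j := by
      rw [hkj]; gcongr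
    have hkjpos : (0 : ℝ) < (k : ℝ) * j := lt_of_lt_of_le (by positivity) hkj'
    have hkpos : 0 < k := by
      rcases Nat.eq_zero_or_pos k with h | h
      · simp [h] at hkjpos
      · exact h
    have hjpos : 0 < j := by
      rcases Nat.eq_zero_or_pos j with h | h
      · simp [h] at hkjpos
      · exact h
    have h3 := conv _ (choose_stirling k j hkpos hjpos)
    rw [← hndef] at h3
    have h4 : √((n : ℝ) / (2 * Real.pi * (k * j))) ≤ √(2 / (Real.pi * n * q)) := by
      apply Real.sqrt_le_sqrt
      have hπ := Real.pi_pos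
      rw [div_le_div_iff₀ (by positivity) (by positivity)]
      have := mul_le_mul_of_nonneg_left hkj' hπ.le
      nlinarith
    have h5 : (n : ℝ) * (φ x - φ ms) ≤
        -(2 * a / n) * ((k : ℝ) - n * (1 + ms) / 2) ^ 2 := by
      have h6 : (n : ℝ) * (φ x - φ ms) ≤ n * (-(a / 2 * (x - ms) ^ 2)) := by
        gcongr
        linarith
      refine h6.trans (le_of_eq ?_)
      rw [hx]
      field_simp
      ring
    have h7 : Stirling.stirlingSeq n / √Real.pi * √((n : ℝ) / (2 * Real.pi * (k * j))) *
        Real.exp (n * (φ x - φ ms)) ≤ Stirling.stirlingSeq n / √Real.pi *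
        √(2 / (Real.pi * n * q)) *
        Real.exp (-(2 * a / n) * ((k : ℝ) - n * (1 + ms) / 2) ^ 2) := by
      gcongr
    have h8 : 0 < Real.exp (-η) ^ n := by positivity
    linarith
  · have hxI : x ∈ Set.Icc (-1 : ℝ) 1 := by
      constructor
      · rw [hx, le_div_iff₀ hnR]; linarith
      · rw [hx, div_le_iff₀ hnR]; linarith
    have h3 := conv 1 (by rw [one_mul]; exact choose_le k j)
    have h4 : Real.exp (n * (φ x - φ ms)) ≤ Real.exp (-η) ^ n := by
      rw [← Real.exp_nat_mul]
      apply Real.exp_le_exp.mpr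
      gcongr
      linarith [hfar x hxI hge]
    linarith

theorem tendsto_bound (a q η : ℝ) (ha : 0 < a) (hq : 0 < q) (hη : 0 < η) :
    Tendsto (fun n : ℕ => Stirling.stirlingSeq n / √Real.pi * √(2 / (Real.pi * n * q)) *
        (2 + √(Real.pi / (2 * a / n))) + ((n : ℝ) + 1) * Real.exp (-η) ^ n) atTop
      (nhds (√(1 / (a * q)))) := by
  have hπ := Real.pi_pos
  have hS : Tendsto (fun n : ℕ => Stirling.stirlingSeq n / √Real.pi) atTop (nhds 1) := by
    have := Stirling.tendsto_stirlingSeq_sqrt_pi.div_const (√Real.pi)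
    rwa [div_self (by positivity)] at this
  have h1 : Tendsto (fun n : ℕ => √(2 / (Real.pi * n * q))) atTop (nhds 0) := by
    have h : Tendsto (fun n : ℕ => 2 / (Real.pi * q) / (n : ℝ)) atTop (nhds 0) :=
      tendsto_const_div_atTop_nhds_zero_nat _
    have h' := h.sqrt
    rw [Real.sqrt_zero] at h'
    refine h'.congr fun n => ?_
    congr 1
    rw [div_div]
    ring
  have h2 : Tendsto (fun n : ℕ => √(2 / (Real.pi * n * q)) * (2 + √(Real.pi / (2 * a / n)))) atTop
      (nhds (√(1 / (a * q)))) := by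
    have h3 : Tendsto (fun n : ℕ => √(2 / (Real.pi * n * q)) * 2 + √(1 / (a * q))) atTop
        (nhds (√(1 / (a * q)))) := by
      have := (h1.mul_const 2).add_const (√(1 / (a * q)))
      simpa only [zero_mul, zero_add] using this
    refine h3.congr' ?_
    filter_upwards [eventually_gt_atTop 0] with n hn
    have hn' : (0 : ℝ) < n := by exact_mod_cast hn
    rw [mul_add, ← Real.sqrt_mul (by positivity)]
    congr 2
    field_simp
  have hr0 : 0 ≤ Real.exp (-η) := (Real.exp_pos _).le
  have hr1 : Real.exp (-η) < 1 := by
    rw [Real.exp_lt_one_iff]; linarith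
  have h4 := tendsto_self_mul_const_pow_of_lt_one hr0 hr1
  have h5 := tendsto_pow_atTop_nhds_zero_of_lt_one hr0 hr1
  have h6 := (hS.mul h2).add (h4.add h5)
  simp only [one_mul, add_zero] at h6
  refine h6.congr fun n => ?_
  ring

/-! ### The free energy bound -/

/-- If `ψ` is smooth on `[−1,1]`, `φ = ψ + h` has a unique global maximizer
`m* ∈ (−1,1)` on `[−1,1]`, and `φ''(m*) = −ε < 0`, then
`limsup_n (log Z_ψ^{(n)} − n·φ(m*)) ≤ (3/2)·log(1/(1−(m*)²)) + (1/2)·log(1/ε)`. -/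
theorem one_dimensional_free_energy_bound (ψ : ℝ → ℝ)
    (hψ : ContDiffOn ℝ (⊤ : ℕ∞) ψ (Set.Icc (-1 : ℝ) 1))
    (φ : ℝ → ℝ) (hφ : ∀ m, φ m = ψ m + entH m)
    (mstar : ℝ) (hmem : mstar ∈ Set.Ioo (-1 : ℝ) 1)
    (hmax : ∀ x ∈ Set.Icc (-1 : ℝ) 1, x ≠ mstar → φ x < φ mstar)
    (ε : ℝ) (hε : 0 < ε) (hsec : deriv (deriv φ) mstar = -ε) :
    ∀ c > 0, ∀ᶠ n : ℕ in atTop,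
      Real.log (Zpsi n ψ) - n * φ mstar ≤
        (3 / 2) * Real.log (1 / (1 - mstar ^ 2)) + (1 / 2) * Real.log (1 / ε) + c := by
  intro c hc
  have hq0 : 0 < 1 - mstar ^ 2 := by nlinarith [hmem.1, hmem.2]
  have hec : Real.exp (-(c / 2)) < 1 := by
    rw [Real.exp_lt_one_iff]; linarith
  have hec0 := Real.exp_pos (-(c / 2))
  -- Shrinking both constants by `exp (-c / 2)` costs `c / 2` in the logarithm of the limit.
  obtain ⟨a, ha⟩ : ∃ a, a = ε * Real.exp (-(c / 2)) := ⟨_, rfl⟩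
  obtain ⟨q, hq⟩ : ∃ q, q = (1 - mstar ^ 2) * Real.exp (-(c / 2)) := ⟨_, rfl⟩
  have ha0 : 0 < a := by rw [ha]; positivity
  have hqpos : 0 < q := by rw [hq]; positivity
  have haε : a < ε := by rw [ha]; nlinarith
  have hqlt : q < 1 - mstar ^ 2 := by rw [hq]; nlinarith
  have hφ' : φ = fun m => ψ m + entH m := funext hφ
  have hcont : ContinuousOn φ (Set.Icc (-1) 1) := by
    rw [hφ']
    exact hψ.continuousOn.add continuous_entH.continuousOn
  have hnhds : Set.Ioo (-1 : ℝ) 1 ∈ nhds mstar := isOpen_Ioo.mem_nhds hmem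
  have hdiff : ∀ᶠ x in nhds mstar, DifferentiableAt ℝ φ x := by
    filter_upwards [hnhds] with x hx
    rw [hφ']
    have h1 : DifferentiableAt ℝ ψ x :=
      (hψ.contDiffAt (Icc_mem_nhds hx.1 hx.2)).differentiableAt (by simp)
    exact h1.add (differentiableAt_entH hx)
  have hloc : IsLocalMax φ mstar := by
    filter_upwards [hnhds] with x hx
    rcases eq_or_ne x mstar with rfl | h
    · exact le_rfl
    · exact (hmax x (Set.Ioo_subset_Icc_self hx) h).le
  have hquad := quad_bound φ mstar ε a haε hε hdiff hloc hsec
  have hqev : ∀ᶠ x in nhds mstar, q ≤ 1 - x ^ 2 := by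
    have : ContinuousAt (fun x : ℝ => 1 - x ^ 2) mstar := by fun_prop
    filter_upwards [this.eventually (lt_mem_nhds hqlt)] with x hx using hx.le
  obtain ⟨δ, hδ, hnear⟩ := Metric.eventually_nhds_iff.mp (hquad.and hqev)
  obtain ⟨η, hη, hfar⟩ := gap φ mstar δ hδ hcont hmax
  have hlim := tendsto_bound a q η ha0 hqpos hη
  set T := (3 / 2) * Real.log (1 / (1 - mstar ^ 2)) + (1 / 2) * Real.log (1 / ε) with hT
  have hlt : √(1 / (a * q)) < Real.exp (T + c) := by
    rw [← Real.log_lt_iff_lt_exp (by positivity), Real.log_sqrt (by positivity), one_div,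
      Real.log_inv, Real.log_mul ha0.ne' hqpos.ne', ha, hq, Real.log_mul hε.ne' hec0.ne',
      Real.log_mul hq0.ne' hec0.ne', Real.log_exp, hT, one_div (1 - mstar ^ 2), one_div ε, Real.log_inv,
      Real.log_inv]
    have : Real.log (1 - mstar ^ 2) ≤ 0 :=
      Real.log_nonpos hq0.le (by nlinarith [sq_nonneg mstar])
    linarith
  filter_upwards [hlim.eventually (gt_mem_nhds hlt), eventually_gt_atTop 0] with n hn hn0
  have hn0' : (0 : ℝ) < n := by exact_mod_cast hn0
  have hZ : Zpsi n ψ * Real.exp (-(n * φ mstar)) < Real.exp (T + c) := by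
    refine lt_of_le_of_lt ?_ hn
    rw [Zpsi_eq, Finset.sum_mul]
    have hS : 0 ≤ Stirling.stirlingSeq n := by
      rw [Stirling.stirlingSeq]; positivity
    calc _ ≤ ∑ k ∈ Finset.range (n + 1),
          (Stirling.stirlingSeq n / √Real.pi * √(2 / (Real.pi * n * q)) *
            Real.exp (-(2 * a / n) * ((k : ℝ) - n * (1 + mstar) / 2) ^ 2) +
              Real.exp (-η) ^ n) := by
          refine Finset.sum_le_sum fun k hk => ?_
          exact term_bound ψ φ hφ mstar δ a q η hqpos (fun x hx => hnear hx) hfar n hn0 k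
            (by simpa [Nat.lt_succ_iff] using hk)
      _ ≤ _ := by
          rw [Finset.sum_add_distrib, ← Finset.mul_sum]
          have := sum_gauss (2 * a / n) (by positivity) (n * (1 + mstar) / 2)
            (Finset.range (n + 1))
          gcongr
          simp
  have hZpos : 0 < Zpsi n ψ := by
    unfold Zpsi
    have : 0 < ∑ σ : Fin n → Bool, Real.exp (n * ψ (mag σ / n)) :=
      Finset.sum_pos (fun _ _ => Real.exp_pos _) Finset.univ_nonempty
    positivity
  rw [← Real.log_lt_iff_lt_exp (by positivity), Real.log_mul hZpos.ne' (Real.exp_pos _).ne',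
    Real.log_exp] at hZ
  linarith
end

section
/- Let Ω ⊆ ℂ be an open set containing 0, let R > 0 be such that the closed disk of radius R around 0 is contained in Ω, and let ℓ : Ω → ℂ be analytic with ℓ(0) = 0. Then E_G[ Σ_{ω ∈ D(0,R), Z_G(ℓ(ω))=0} m_ω · log(R/|ω|) ] ≤ (1/2) · E_θ[ log Z_CW(|ℓ(R·e^{iθ})|²) ], where θ is uniform on [−π,π], and m_ω denotes the order of vanishing at ω of the analytic function z ↦ Z_G(ℓ(z)). (Since Z_G(ℓ(0)) = 1, this function is not identically zero, its zeros in D(0,R) form a finite set, each has finite order, and the sum is a finite sum of nonnegative terms.) -/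
/-!
Fix the disorder `G`. Since `Z_G(ℓ(0)) = 1`, Jensen's formula
(`finsum_zeros_eq_circleAverage`) turns the weighted sum over zeros into the average of
`log |Z_G(ℓ(z))|` over the circle of radius `R`.

The Hamiltonian is a centred Gaussian field with covariance `n ξ(⟨σ, τ⟩ / n)`
(`sum_spinCoeff_mul`), so expanding `|Z_G(β)|²` over pairs of configurations and using the
Gaussian moment generating function gives
`E |Z_G(β)|² = exp(n ξ(1) Re β²) · Z_CW(|β|²)` (`hasSecondMoment`).

Write `A(z)` for this second moment at `β = ℓ(z)`. The concavity of the logarithm is used in the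
linearised form `log |Z|² ≤ |Z|² / A - 1 + log A`. After averaging over the circle, the majorant
is an integrable function of `G`, and by Fubini its first two terms cancel in expectation
(`circleAverage_ratio`). Only the Fubini theorem for the nonnegative continuous function
`|Z|² / A` is needed, and no measurability of the sum over zeros, since that sum is nonnegative
and bounded above by the majorant.

What remains is half the circle average of `log A`. The term `n ξ(1) Re ℓ(z)²` is harmonic and
vanishes at the centre, so its average is zero, leaving half the average of
`log Z_CW(|ℓ(z)|²)` (`circleAverage_log_secondMoment`).
-/

open MeasureTheory ProbabilityTheory

/-- Index set for the Gaussian disorder. -/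
abbrev SpinIdx (pmax n : ℕ) := Σ p : Fin (pmax + 1), (Fin (p : ℕ) → Fin n)

/-- The disorder distribution: i.i.d. standard Gaussians over all index tuples. -/
noncomputable def disorder (pmax n : ℕ) : Measure ((SpinIdx pmax n) → ℝ) :=
  Measure.pi fun _ => gaussianReal 0 1

/-- The mixed `p`-spin Hamiltonian. -/
noncomputable def hamiltonian (pmax n : ℕ) (γ : ℕ → ℝ) (G : SpinIdx pmax n → ℝ)
    (σ : Fin n → Bool) : ℝ :=
  ∑ p : Fin (pmax + 1), if 2 ≤ (p : ℕ) then
      γ (p : ℕ) * (n : ℝ) ^ (-((((p : ℕ) : ℝ) - 1) / 2)) *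
        ∑ α : Fin (p : ℕ) → Fin n, G ⟨p, α⟩ * ∏ j, spin (σ (α j))
    else 0

/-- The mixture function `ξ(s) = Σ_{p=2}^{p_max} γ_p² s^p`. -/
noncomputable def mix (pmax : ℕ) (γ : ℕ → ℝ) (s : ℝ) : ℝ :=
  ∑ p ∈ Finset.Icc 2 pmax, γ p ^ 2 * s ^ p

/-- The (complex) partition function `Z_G(β) = 2^{-n} Σ_σ exp(β H_G(σ))`. -/
noncomputable def Zpart (pmax n : ℕ) (γ : ℕ → ℝ) (G : SpinIdx pmax n → ℝ) (β : ℂ) : ℂ :=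
  (2 : ℂ) ^ (-(n : ℤ)) * ∑ σ : Fin n → Bool,
    Complex.exp (β * (hamiltonian pmax n γ G σ : ℂ))

/-- The mixed `p`-spin Curie–Weiss partition function. -/
noncomputable def Zcw (pmax n : ℕ) (γ : ℕ → ℝ) (β : ℝ) : ℝ :=
  (2 : ℝ) ^ (-(n : ℤ)) * ∑ σ : Fin n → Bool,
    Real.exp (β * n * mix pmax γ (mag σ / n))

/-- The order of vanishing of `F` at `ω`: the least `k` such that the `k`-th complex
derivative of `F` at `ω` is nonzero (and `0` if there is no such `k`). -/
noncomputable def vOrder (F : ℂ → ℂ) (ω : ℂ) : ℕ :=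
  sInf {k : ℕ | iteratedDeriv k F ω ≠ 0}

/-! ### Jensen's formula with the orders of vanishing -/

/-- Both sides are `0` when `F` vanishes identically near `ω`. -/
lemma vOrder_eq_analyticOrderNatAt {F : ℂ → ℂ} {ω : ℂ} (hF : AnalyticAt ℂ F ω) :
    vOrder F ω = analyticOrderNatAt F ω := by
  unfold vOrder
  by_cases htop : analyticOrderAt F ω = ⊤
  · have h : ∀ k, iteratedDeriv k F ω = 0 := fun k =>
      (natCast_le_analyticOrderAt_iff_iteratedDeriv_eq_zero hF (n := k + 1)).1
        (by rw [htop]; exact le_top) k (Nat.lt_succ_self k)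
    simp [h, analyticOrderNatAt, htop]
  · have h := (analyticOrderAt_eq_nat_iff_iteratedDeriv_eq_zero hF
      (n := analyticOrderNatAt F ω)).1 (Nat.cast_analyticOrderNatAt htop).symm
    refine le_antisymm (Nat.sInf_le h.2) (le_csInf ⟨_, h.2⟩ fun k hk => ?_)
    by_contra! hlt
    exact hk (h.1 k hlt)

lemma divisor_eq_vOrder {F : ℂ → ℂ} {U : Set ℂ} (hF : AnalyticOnNhd ℂ F U) {ω : ℂ} (hω : ω ∈ U) :
    MeromorphicOn.divisor F U ω = (vOrder F ω : ℤ) := by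
  rw [vOrder_eq_analyticOrderNatAt (hF ω hω), MeromorphicOn.AnalyticOnNhd.divisor_apply hF hω,
    analyticOrderNatAt]
  cases analyticOrderAt F ω <;> simp

/-- Jensen's formula. Zeros on the boundary circle carry weight `log 1 = 0`. -/
lemma finsum_zeros_eq_circleAverage {F : ℂ → ℂ} {R : ℝ} (hR : 0 < R)
    (hF : AnalyticOnNhd ℂ F (Metric.closedBall 0 R)) (hF0 : F 0 = 1) :
    ∑ᶠ ω ∈ {ω : ℂ | ω ∈ Metric.ball (0 : ℂ) R ∧ F ω = 0},
        (vOrder F ω : ℝ) * Real.log (R / ‖ω‖)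
      = Real.circleAverage (fun z => Real.log ‖F z‖) 0 R := by
  classical
  have hJ := AnalyticOnNhd.circleAverage_log_norm (c := 0) (f := F) hR.ne'
    (by rwa [abs_of_pos hR]) (by simp [hF0])
  rw [hJ, hF0, abs_of_pos hR]
  simp only [norm_one, Real.log_one, add_zero]
  refine finsum_congr fun ω => ?_
  by_cases hω : ω ∈ Metric.closedBall (0 : ℂ) R
  · rw [divisor_eq_vOrder hF hω]
    by_cases hs : ω ∈ {ω : ℂ | ω ∈ Metric.ball (0 : ℂ) R ∧ F ω = 0}
    · rw [finsum_eq_if, if_pos hs]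
      simp [div_eq_mul_inv]
    · rw [finsum_eq_if, if_neg hs]
      by_cases hb : ω ∈ Metric.ball (0 : ℂ) R
      · have h0 : F ω ≠ 0 := fun h => hs ⟨hb, h⟩
        have : vOrder F ω = 0 := by
          rw [vOrder_eq_analyticOrderNatAt (hF ω hω), analyticOrderNatAt,
            (hF ω hω).analyticOrderAt_eq_zero.2 h0]
          rfl
        simp [this]
      · have : ‖ω‖ = R := by
          simp only [Metric.mem_closedBall, Metric.mem_ball, dist_zero_right, not_lt] at hω hb
          exact le_antisymm hω hb
        simp [this, hR.ne']
  · rw [finsum_eq_if, if_neg fun h => hω (Metric.ball_subset_closedBall h.1)]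
    simp [hω]

/-! ### The Gaussian disorder -/

/-- The coefficient of the Gaussian variable `G i` in the Hamiltonian at `σ`. -/
noncomputable def spinCoeff (pmax n : ℕ) (γ : ℕ → ℝ) (σ : Fin n → Bool) (i : SpinIdx pmax n) : ℝ :=
  if 2 ≤ (i.1 : ℕ) then
    γ i.1 * (n : ℝ) ^ (-((((i.1 : ℕ) : ℝ) - 1) / 2)) * ∏ j, spin (σ (i.2 j))
  else 0

lemma hamiltonian_eq_sum (pmax n : ℕ) (γ : ℕ → ℝ) (G : SpinIdx pmax n → ℝ) (σ : Fin n → Bool) :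
    hamiltonian pmax n γ G σ = ∑ i, spinCoeff pmax n γ σ i * G i := by
  rw [hamiltonian, Fintype.sum_sigma]
  refine Finset.sum_congr rfl fun p _ => ?_
  by_cases hp : 2 ≤ (p : ℕ)
  · simp only [spinCoeff, hp, if_true, Finset.mul_sum]
    exact Finset.sum_congr rfl fun α _ => by ring
  · simp [spinCoeff, hp]

/-- The configuration whose spins are the products of the spins of `σ` and `τ`, so that
`mag (agree σ τ)` is the overlap `⟨σ, τ⟩`. -/
def agree {n : ℕ} (σ τ : Fin n → Bool) : Fin n → Bool := fun i => σ i == τ i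

lemma agree_involutive {n : ℕ} (σ : Fin n → Bool) : Function.Involutive (agree σ) := by
  intro τ
  funext i
  simp only [agree]
  cases σ i <;> cases τ i <;> rfl

lemma spin_mul_spin (a b : Bool) : spin a * spin b = spin (a == b) := by
  cases a <;> cases b <;> simp [spin]

lemma mag_agree_self {n : ℕ} (σ : Fin n → Bool) : mag (agree σ σ) = n := by
  simp [mag, agree, spin]

/-- The covariance of the Hamiltonian: `E H(σ) H(τ) = n ξ(⟨σ, τ⟩ / n)`. -/
lemma sum_spinCoeff_mul (pmax n : ℕ) (hn : 1 ≤ n) (γ : ℕ → ℝ) (σ τ : Fin n → Bool) :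
    ∑ i, spinCoeff pmax n γ σ i * spinCoeff pmax n γ τ i
      = n * mix pmax γ (mag (agree σ τ) / n) := by
  have hn0 : (0 : ℝ) < n := by exact_mod_cast hn
  have hterm : ∀ p : Fin (pmax + 1),
      ∑ α : Fin (p : ℕ) → Fin n,
        spinCoeff pmax n γ σ ⟨p, α⟩ * spinCoeff pmax n γ τ ⟨p, α⟩
      = if 2 ≤ (p : ℕ) then n * (γ p ^ 2 * (mag (agree σ τ) / n) ^ (p : ℕ)) else 0 := by
    intro p
    by_cases hp : 2 ≤ (p : ℕ)
    · simp only [spinCoeff, hp, if_true]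
      have hpow : ((n : ℝ) ^ (-((((p : ℕ) : ℝ) - 1) / 2))) ^ 2 = n / (n : ℝ) ^ (p : ℕ) := by
        rw [← Real.rpow_natCast, ← Real.rpow_mul hn0.le, ← Real.rpow_natCast (n : ℝ) p]
        nth_rewrite 2 [← Real.rpow_one (n : ℝ)]
        rw [← Real.rpow_sub hn0]
        congr 1
        push_cast
        ring
      have hmag : mag (agree σ τ) ^ (p : ℕ)
          = ∑ α : Fin (p : ℕ) → Fin n, (∏ j, spin (σ (α j))) * ∏ j, spin (τ (α j)) := by
        rw [mag, Fintype.sum_pow]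
        refine Finset.sum_congr rfl fun α _ => ?_
        rw [← Finset.prod_mul_distrib]
        exact Finset.prod_congr rfl fun j _ => by rw [spin_mul_spin]; rfl
      calc _ = γ p ^ 2 * ((n : ℝ) ^ (-((((p : ℕ) : ℝ) - 1) / 2))) ^ 2 *
            ∑ α : Fin (p : ℕ) → Fin n, (∏ j, spin (σ (α j))) * ∏ j, spin (τ (α j)) := by
            rw [Finset.mul_sum]
            exact Finset.sum_congr rfl fun α _ => by ring
        _ = _ := by
            rw [← hmag, hpow, div_pow]
            ring
    · simp [spinCoeff, hp]
  rw [Fintype.sum_sigma, Finset.sum_congr rfl fun p _ => hterm p,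
    Fin.sum_univ_eq_sum_range
      (fun p => if 2 ≤ p then n * (γ p ^ 2 * (mag (agree σ τ) / n) ^ p) else (0 : ℝ)),
    ← Finset.sum_filter, mix, Finset.mul_sum]
  refine Finset.sum_congr ?_ fun _ _ => rfl
  ext p
  simp only [Finset.mem_filter, Finset.mem_range, Finset.mem_Icc]
  omega

instance (pmax n : ℕ) : IsProbabilityMeasure (disorder pmax n) := by
  unfold disorder; infer_instance

lemma integrable_cexp_mul_gaussian (c : ℂ) :
    Integrable (fun x : ℝ => Complex.exp (c * x)) (gaussianReal 0 1) := by
  refine integrable_cexp_mul_of_re_mem_integrableExpSet (X := id) aemeasurable_id ?_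
  exact integrable_exp_mul_gaussianReal _

lemma integrable_cexp_sum (pmax n : ℕ) (c : SpinIdx pmax n → ℂ) :
    Integrable (fun G : SpinIdx pmax n → ℝ => Complex.exp (∑ i, c i * G i))
      (disorder pmax n) := by
  simp only [Complex.exp_sum]
  exact Integrable.fintype_prod fun i => integrable_cexp_mul_gaussian (c i)

/-- The moment generating function of the disorder at a complex argument. -/
lemma integral_cexp_sum (pmax n : ℕ) (c : SpinIdx pmax n → ℂ) :
    ∫ G : SpinIdx pmax n → ℝ, Complex.exp (∑ i, c i * G i) ∂(disorder pmax n)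
      = Complex.exp ((∑ i, c i ^ 2) / 2) := by
  simp only [Complex.exp_sum]
  rw [disorder, integral_fintype_prod_eq_prod (𝕜 := ℂ)
    (fun (i : SpinIdx pmax n) (x : ℝ) => Complex.exp (c i * x)), Finset.sum_div, Complex.exp_sum]
  refine Finset.prod_congr rfl fun i _ => ?_
  have := complexMGF_gaussianReal (p := gaussianReal 0 1) (X := id) (μ := 0) (v := 1)
    (by simp) (c i)
  simpa [complexMGF] using this

/-! ### The second moment of the partition function -/

/-- The closed form `exp(n ξ(1) Re β²) · Z_CW(|β|²)` of the second moment `E |Z_G(β)|²`. -/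
noncomputable def secondMoment (pmax n : ℕ) (γ : ℕ → ℝ) (β : ℂ) : ℝ :=
  Real.exp (n * mix pmax γ 1 * (β ^ 2).re) * Zcw pmax n γ (‖β‖ ^ 2)

lemma Zcw_pos (pmax n : ℕ) (γ : ℕ → ℝ) (b : ℝ) : 0 < Zcw pmax n γ b := by
  unfold Zcw
  have : (0 : ℝ) < ∑ σ : Fin n → Bool, Real.exp (b * n * mix pmax γ (mag σ / n)) :=
    Finset.sum_pos (fun _ _ => Real.exp_pos _) Finset.univ_nonempty
  positivity

lemma continuous_Zcw (pmax n : ℕ) (γ : ℕ → ℝ) : Continuous (Zcw pmax n γ) := by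
  unfold Zcw; fun_prop

lemma secondMoment_pos (pmax n : ℕ) (γ : ℕ → ℝ) (β : ℂ) : 0 < secondMoment pmax n γ β :=
  mul_pos (Real.exp_pos _) (Zcw_pos _ _ _ _)

lemma continuous_secondMoment (pmax n : ℕ) (γ : ℕ → ℝ) : Continuous (secondMoment pmax n γ) := by
  unfold secondMoment
  have := continuous_Zcw pmax n γ
  fun_prop

/-- `|Z_G(β)|²` as a sum over pairs of configurations (two replicas) of exponentials that are
linear in the disorder. -/
lemma norm_sq_Zpart (pmax n : ℕ) (γ : ℕ → ℝ) (G : SpinIdx pmax n → ℝ) (β : ℂ) :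
    ((‖Zpart pmax n γ G β‖ ^ 2 : ℝ) : ℂ)
      = (2 : ℂ) ^ (-(n : ℤ)) * (2 : ℂ) ^ (-(n : ℤ)) * ∑ σ : Fin n → Bool, ∑ τ : Fin n → Bool,
        Complex.exp (∑ i, (β * spinCoeff pmax n γ σ i
          + (starRingEnd ℂ) β * spinCoeff pmax n γ τ i) * G i) := by
  have hconj : (starRingEnd ℂ) (Zpart pmax n γ G β)
      = (2 : ℂ) ^ (-(n : ℤ)) * ∑ τ : Fin n → Bool,
        Complex.exp ((starRingEnd ℂ) β * (hamiltonian pmax n γ G τ : ℂ)) := by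
    have h2 : (starRingEnd ℂ) 2 = 2 := Complex.conj_ofNat 2
    simp [Zpart, ← Complex.exp_conj, h2]
  rw [Complex.ofReal_pow, ← Complex.mul_conj', hconj, Zpart, mul_mul_mul_comm,
    Finset.sum_mul_sum]
  congr 1
  refine Finset.sum_congr rfl fun σ _ => Finset.sum_congr rfl fun τ _ => ?_
  rw [← Complex.exp_add, hamiltonian_eq_sum, hamiltonian_eq_sum]
  congr 1
  push_cast
  rw [Finset.mul_sum, Finset.mul_sum, ← Finset.sum_add_distrib]
  exact Finset.sum_congr rfl fun i _ => by ring

/-- The Gaussian exponent of a pair of replicas: half the (non-conjugated) variance of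
`β H(σ) + conj β H(τ)`. -/
lemma sum_sq_spinCoeff (pmax n : ℕ) (hn : 1 ≤ n) (γ : ℕ → ℝ) (σ τ : Fin n → Bool) (β : ℂ) :
    (∑ i, (β * spinCoeff pmax n γ σ i
        + (starRingEnd ℂ) β * spinCoeff pmax n γ τ i) ^ 2) / 2
      = ((n * mix pmax γ 1 * (β ^ 2).re
          + ‖β‖ ^ 2 * n * mix pmax γ (mag (agree σ τ) / n) : ℝ) : ℂ) := by
  have hn0 : (n : ℝ) ≠ 0 := by positivity
  have key : ∀ σ τ : Fin n → Bool,
      ∑ i, (spinCoeff pmax n γ σ i : ℂ) * spinCoeff pmax n γ τ i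
        = ((n * mix pmax γ (mag (agree σ τ) / n) : ℝ) : ℂ) := fun σ τ => by
    rw [← sum_spinCoeff_mul pmax n hn γ σ τ]; push_cast; rfl
  have hdiag : ∀ σ : Fin n → Bool,
      ∑ i, (spinCoeff pmax n γ σ i : ℂ) * spinCoeff pmax n γ σ i
        = ((n * mix pmax γ 1 : ℝ) : ℂ) := fun σ => by
    rw [key, mag_agree_self, div_self hn0]
  have hre : ((2 * (β ^ 2).re : ℝ) : ℂ) = β ^ 2 + (starRingEnd ℂ) β ^ 2 := by
    rw [← map_pow, Complex.add_conj]
  have hexp : ∑ i, (β * spinCoeff pmax n γ σ i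
        + (starRingEnd ℂ) β * spinCoeff pmax n γ τ i) ^ 2
      = β ^ 2 * ∑ i, (spinCoeff pmax n γ σ i : ℂ) * spinCoeff pmax n γ σ i
        + (starRingEnd ℂ) β ^ 2 * ∑ i, (spinCoeff pmax n γ τ i : ℂ) * spinCoeff pmax n γ τ i
        + 2 * (β * (starRingEnd ℂ) β)
          * ∑ i, (spinCoeff pmax n γ σ i : ℂ) * spinCoeff pmax n γ τ i := by
    rw [Finset.mul_sum, Finset.mul_sum, Finset.mul_sum, ← Finset.sum_add_distrib,
      ← Finset.sum_add_distrib]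
    exact Finset.sum_congr rfl fun i _ => by ring
  rw [hexp, hdiag, hdiag, key, Complex.mul_conj']
  rw [Complex.ofReal_mul] at hre
  push_cast at hre ⊢
  linear_combination -((n : ℂ) * (mix pmax γ 1 : ℂ) / 2) * hre

lemma hasSecondMoment (pmax n : ℕ) (hn : 1 ≤ n) (γ : ℕ → ℝ) (β : ℂ) :
    Integrable (fun G => ‖Zpart pmax n γ G β‖ ^ 2) (disorder pmax n) ∧
      ∫ G, ‖Zpart pmax n γ G β‖ ^ 2 ∂(disorder pmax n) = secondMoment pmax n γ β := by
  have hint : Integrable (fun G => ((‖Zpart pmax n γ G β‖ ^ 2 : ℝ) : ℂ)) (disorder pmax n) := by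
    simp only [norm_sq_Zpart]
    exact (integrable_finsetSum _ fun σ _ => integrable_finsetSum _ fun τ _ =>
      integrable_cexp_sum pmax n _).const_mul _
  refine ⟨hint.re, ?_⟩
  rw [← Complex.ofReal_inj, ← integral_complex_ofReal]
  simp only [norm_sq_Zpart]
  rw [integral_const_mul, integral_finsetSum _ fun σ _ => integrable_finsetSum _ fun τ _ =>
      integrable_cexp_sum pmax n _]
  have hsum : ∀ σ : Fin n → Bool,
      ∫ G : SpinIdx pmax n → ℝ, ∑ τ : Fin n → Bool,
        Complex.exp (∑ i, (β * spinCoeff pmax n γ σ i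
          + (starRingEnd ℂ) β * spinCoeff pmax n γ τ i) * G i) ∂(disorder pmax n)
      = ((Real.exp (n * mix pmax γ 1 * (β ^ 2).re) * ∑ τ : Fin n → Bool,
          Real.exp (‖β‖ ^ 2 * n * mix pmax γ (mag τ / n)) : ℝ) : ℂ) := by
    intro σ
    rw [integral_finsetSum _ fun τ _ => integrable_cexp_sum pmax n _]
    simp only [integral_cexp_sum, sum_sq_spinCoeff pmax n hn, ← Complex.ofReal_exp]
    -- For fixed `σ`, `τ ↦ agree σ τ` permutes the configurations.
    rw [← Equiv.sum_comp (agree_involutive σ).toPerm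
      (fun τ => Real.exp (‖β‖ ^ 2 * n * mix pmax γ (mag τ / n))), Finset.mul_sum]
    push_cast
    exact Finset.sum_congr rfl fun τ _ => by rw [Complex.exp_add]; rfl
  rw [Finset.sum_congr rfl fun σ _ => hsum σ, Finset.sum_const, secondMoment, Zcw]
  have hcard : (Finset.univ : Finset (Fin n → Bool)).card = 2 ^ n := by simp
  rw [hcard, nsmul_eq_mul]
  push_cast
  have h2 : (2 : ℂ) ^ (-(n : ℤ)) * 2 ^ n = 1 := by
    rw [zpow_neg, zpow_natCast]; exact inv_mul_cancel₀ (pow_ne_zero _ two_ne_zero)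
  linear_combination (2 : ℂ) ^ (-(n : ℤ)) * (Complex.exp (n * mix pmax γ 1 * (β ^ 2).re)
    * ∑ τ : Fin n → Bool, Complex.exp (‖β‖ ^ 2 * n * mix pmax γ (mag τ / n))) * h2

lemma continuous_uncurry_Zpart (pmax n : ℕ) (γ : ℕ → ℝ) {b : ℝ → ℂ} (hb : Continuous b) :
    Continuous fun p : ℝ × (SpinIdx pmax n → ℝ) => Zpart pmax n γ p.2 (b p.1) := by
  simp only [Zpart, hamiltonian_eq_sum]
  fun_prop

/-! ### Averages over the circle -/

/-- Mean value property of the harmonic function `Re ℓ²`, which removes the factor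
`exp(n ξ(1) Re ℓ²)` of the second moment from the final bound. -/
lemma circleAverage_re_sq {ℓ : ℂ → ℂ} {R : ℝ} (hR : 0 < R)
    (hℓ : AnalyticOnNhd ℂ ℓ (Metric.closedBall 0 R)) (hℓ0 : ℓ 0 = 0) :
    Real.circleAverage (fun z => (ℓ z ^ 2).re) 0 R = 0 := by
  have hd : DiffContOnCl ℂ (fun z => ℓ z ^ 2) (Metric.ball 0 |R|) := by
    rw [abs_of_pos hR]
    refine DifferentiableOn.diffContOnCl ?_
    rw [closure_ball _ hR.ne']
    exact (hℓ.pow 2).differentiableOn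
  have hci : CircleIntegrable (fun z => ℓ z ^ 2) 0 R := by
    refine ContinuousOn.circleIntegrable hR.le ?_
    exact ((hℓ.pow 2).continuousOn).mono Metric.sphere_subset_closedBall
  have h := Complex.reCLM.circleAverage_comp_comm hci
  rw [hd.circleAverage, hℓ0] at h
  simpa [Function.comp_def] using h

/-- By Fubini, the circle average of `|Z_G(ℓ(z))|² / E |Z_G(ℓ(z))|²` has expectation one. -/
lemma circleAverage_ratio (pmax n : ℕ) (hn : 1 ≤ n) (γ : ℕ → ℝ) {ℓ : ℂ → ℂ} {R : ℝ}
    (hb : Continuous fun θ => ℓ (circleMap 0 R θ)) :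
    Integrable (fun G => Real.circleAverage
      (fun z => ‖Zpart pmax n γ G (ℓ z)‖ ^ 2 / secondMoment pmax n γ (ℓ z)) 0 R)
      (disorder pmax n) ∧
    ∫ G, Real.circleAverage
      (fun z => ‖Zpart pmax n γ G (ℓ z)‖ ^ 2 / secondMoment pmax n γ (ℓ z)) 0 R
      ∂(disorder pmax n) = 1 := by
  have hpos : ∀ β, secondMoment pmax n γ β ≠ 0 := fun β => (secondMoment_pos pmax n γ β).ne'
  have hone : ∀ β, ∫ G, ‖Zpart pmax n γ G β‖ ^ 2 / secondMoment pmax n γ β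
      ∂(disorder pmax n) = 1 := fun β => by
    rw [integral_div, (hasSecondMoment pmax n hn γ β).2, div_self (hpos β)]
  have hcont : Continuous fun p : ℝ × (SpinIdx pmax n → ℝ) =>
      ‖Zpart pmax n γ p.2 (ℓ (circleMap 0 R p.1))‖ ^ 2
        / secondMoment pmax n γ (ℓ (circleMap 0 R p.1)) := by
    refine Continuous.div ((continuous_uncurry_Zpart pmax n γ hb).norm.pow 2) ?_
      fun _ => hpos _
    exact (continuous_secondMoment pmax n γ).comp (hb.comp continuous_fst)
  have hprod : Integrable (Function.uncurry fun (θ : ℝ) (G : SpinIdx pmax n → ℝ) =>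
      ‖Zpart pmax n γ G (ℓ (circleMap 0 R θ))‖ ^ 2
        / secondMoment pmax n γ (ℓ (circleMap 0 R θ)))
      ((volume.restrict (Set.uIoc 0 (2 * Real.pi))).prod (disorder pmax n)) := by
    refine (integrable_prod_iff hcont.aestronglyMeasurable).2 ⟨?_, ?_⟩
    · exact Filter.Eventually.of_forall fun θ =>
        (hasSecondMoment pmax n hn γ (ℓ (circleMap 0 R θ))).1.div_const
          (secondMoment pmax n γ (ℓ (circleMap 0 R θ)))
    · have : ∀ θ : ℝ, ∫ G, ‖(Function.uncurry fun (θ : ℝ) (G : SpinIdx pmax n → ℝ) =>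
          ‖Zpart pmax n γ G (ℓ (circleMap 0 R θ))‖ ^ 2
          / secondMoment pmax n γ (ℓ (circleMap 0 R θ))) (θ, G)‖ ∂(disorder pmax n) = 1 := by
        intro θ
        rw [← hone (ℓ (circleMap 0 R θ))]
        refine integral_congr_ae (Filter.Eventually.of_forall fun G => ?_)
        exact Real.norm_of_nonneg (div_nonneg (sq_nonneg _) (secondMoment_pos _ _ _ _).le)
      rw [Set.uIoc_of_le Real.two_pi_pos.le]
      exact (integrable_congr (Filter.Eventually.of_forall this)).2 (integrable_const (1 : ℝ))
  constructor
  · have h := hprod.integral_prod_right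
    rw [Set.uIoc_of_le Real.two_pi_pos.le] at h
    simp only [Real.circleAverage_def, intervalIntegral.integral_of_le Real.two_pi_pos.le]
    exact h.smul (2 * Real.pi)⁻¹
  · simp only [Real.circleAverage_def]
    rw [integral_smul, ← intervalIntegral_integral_swap hprod]
    simp only [hone]
    have := Real.pi_ne_zero
    simp
    field_simp

/-- Tangent-line form of the concavity of the logarithm: `log x² ≤ x² / a - 1 + log a`. -/
lemma log_norm_le {x a : ℝ} (hx : x ≠ 0) (ha : 0 < a) :
    Real.log x ≤ (1 / 2) * (x ^ 2 / a - 1 + Real.log a) := by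
  have h := Real.log_le_sub_one_of_pos (div_pos (sq_pos_of_ne_zero hx) ha)
  rw [Real.log_div (pow_ne_zero 2 hx) ha.ne', Real.log_pow] at h
  push_cast at h
  linarith

/-- The tangent-line bound on `log ‖F‖`, with tangency point depending on `z`, averaged over the
circle. -/
lemma circleAverage_log_norm_le {F : ℂ → ℂ} {a : ℂ → ℝ} {R : ℝ} (hR : 0 < R)
    (hF : AnalyticOnNhd ℂ F (Metric.closedBall 0 R)) (hF0 : F 0 ≠ 0)
    (ha : ContinuousOn a (Metric.sphere 0 R)) (hpos : ∀ z, 0 < a z) :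
    Real.circleAverage (fun z => Real.log ‖F z‖) 0 R
      ≤ (1 / 2) * (Real.circleAverage (fun z => ‖F z‖ ^ 2 / a z) 0 R - 1
        + Real.circleAverage (fun z => Real.log (a z)) 0 R) := by
  classical
  have hFs : ContinuousOn F (Metric.sphere 0 R) :=
    hF.continuousOn.mono Metric.sphere_subset_closedBall
  set b : ℂ → ℝ := fun z => (1 / 2) * (‖F z‖ ^ 2 / a z - 1 + Real.log (a z)) with hb
  have hq : ContinuousOn (fun z => ‖F z‖ ^ 2 / a z) (Metric.sphere 0 R) :=
    (hFs.norm.pow 2).div ha fun z _ => (hpos z).ne'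
  have hl : ContinuousOn (fun z => Real.log (a z)) (Metric.sphere 0 R) :=
    ha.log fun z _ => (hpos z).ne'
  have hbi : CircleIntegrable b 0 R :=
    ContinuousOn.circleIntegrable hR.le (((hq.sub continuousOn_const).add hl).const_smul (1 / 2 : ℝ))
  have hbavg : Real.circleAverage b 0 R
      = (1 / 2) * (Real.circleAverage (fun z => ‖F z‖ ^ 2 / a z) 0 R - 1
        + Real.circleAverage (fun z => Real.log (a z)) 0 R) := by
    have h1 := Real.circleAverage_fun_smul (a := (1 / 2 : ℝ)) (c := 0) (R := R)
      (f := fun z => ‖F z‖ ^ 2 / a z - 1 + Real.log (a z))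
    simp only [smul_eq_mul] at h1
    have h2 : CircleIntegrable (fun z => ‖F z‖ ^ 2 / a z - 1) 0 R :=
      ContinuousOn.circleIntegrable hR.le (hq.sub continuousOn_const)
    rw [hb, h1, Real.circleAverage_fun_add h2
      (ContinuousOn.circleIntegrable hR.le hl), Real.circleAverage_fun_sub
      (ContinuousOn.circleIntegrable hR.le hq) (circleIntegrable_const _ _ _),
      Real.circleAverage_const]
  rw [← hbavg]
  -- `Real.log 0 = 0`, so the bound may fail at zeros of `F` on the circle; these are
  -- discrete, and the value there is replaced by that of the majorant.
  set g : ℂ → ℝ := fun z => if F z = 0 then b z else Real.log ‖F z‖ with hg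
  have hcod : (fun z => Real.log ‖F z‖) =ᶠ[Filter.codiscreteWithin (Metric.sphere 0 |R|)] g := by
    have h := AnalyticOnNhd.preimage_zero_mem_codiscreteWithin (x := 0) hF hF0
      (by simp [hR.le]) (Metric.isConnected_closedBall hR.le)
    rw [abs_of_pos hR]
    filter_upwards [Filter.codiscreteWithin_mono Metric.sphere_subset_closedBall h] with z hz
    have hz' : F z ≠ 0 := hz
    simp [hg, hz']
  have hlog : CircleIntegrable (fun z => Real.log ‖F z‖) 0 R :=
    MeromorphicOn.circleIntegrable_log_norm_of_nonneg
      (fun z hz => (hF z (Metric.sphere_subset_closedBall hz)).meromorphicAt) hR.le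
  rw [Real.circleAverage_congr_codiscreteWithin hcod hR.ne']
  refine Real.circleAverage_mono (hlog.congr_codiscreteWithin hcod) hbi fun z _ => ?_
  by_cases hz : F z = 0
  · simp [hg, hz]
  · simp only [hg, hz, if_false]
    exact log_norm_le (norm_ne_zero_iff.2 hz) (hpos z)

lemma circleAverage_log_secondMoment (pmax n : ℕ) (γ : ℕ → ℝ) {ℓ : ℂ → ℂ} {R : ℝ} (hR : 0 < R)
    (hℓ : AnalyticOnNhd ℂ ℓ (Metric.closedBall 0 R)) (hℓ0 : ℓ 0 = 0) :
    Real.circleAverage (fun z => Real.log (secondMoment pmax n γ (ℓ z))) 0 R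
      = Real.circleAverage (fun z => Real.log (Zcw pmax n γ (‖ℓ z‖ ^ 2))) 0 R := by
  have hs : ContinuousOn ℓ (Metric.sphere 0 R) :=
    hℓ.continuousOn.mono Metric.sphere_subset_closedBall
  have h1 : CircleIntegrable (fun z => n * mix pmax γ 1 * (ℓ z ^ 2).re) 0 R :=
    ContinuousOn.circleIntegrable hR.le
      ((Complex.continuous_re.comp_continuousOn (hs.pow 2)).const_smul (n * mix pmax γ 1))
  have h2 : CircleIntegrable (fun z => Real.log (Zcw pmax n γ (‖ℓ z‖ ^ 2))) 0 R :=
    ContinuousOn.circleIntegrable hR.le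
      (((continuous_Zcw pmax n γ).comp_continuousOn (hs.norm.pow 2)).log
        fun _ _ => (Zcw_pos _ _ _ _).ne')
  simp only [secondMoment, Real.log_mul (Real.exp_ne_zero _) (Zcw_pos _ _ _ _).ne', Real.log_exp]
  have h3 := Real.circleAverage_fun_smul (a := n * mix pmax γ 1) (c := 0) (R := R)
      (f := fun z => (ℓ z ^ 2).re)
  simp only [smul_eq_mul] at h3
  rw [Real.circleAverage_fun_add h1 h2, h3, circleAverage_re_sq hR hℓ hℓ0]
  ring

lemma circleAverage_eq_integral_neg_pi_pi (f : ℂ → ℝ) (R : ℝ) :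
    Real.circleAverage f 0 R = (2 * Real.pi)⁻¹ *
      ∫ θ in (-Real.pi)..Real.pi, f ((R : ℂ) * Complex.exp (θ * Complex.I)) := by
  have hper : (fun θ => f (circleMap 0 R θ)).Periodic (2 * Real.pi) :=
    fun x => by simp [periodic_circleMap 0 R x]
  have h := hper.intervalIntegral_add_eq 0 (-Real.pi)
  rw [zero_add, show -Real.pi + 2 * Real.pi = Real.pi by ring] at h
  rw [Real.circleAverage_def, h, smul_eq_mul]
  simp [circleMap]

/-- (Second moment bound on zeros.)  For `ℓ` analytic on an open set `Ω`
containing the closed disk of radius `R`, with `ℓ(0) = 0`,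
`E_G[Σ_{ω ∈ D(0,R), Z_G(ℓ(ω)) = 0} m_ω log(R/|ω|)] ≤ (1/2)·E_θ[log Z_CW(|ℓ(Re^{iθ})|²)]`,
where `θ ~ Unif[−π,π]` and `m_ω` is the order of vanishing of `z ↦ Z_G(ℓ(z))` at `ω`. -/
theorem second_moment_bound_on_zeros (pmax n : ℕ) (hpmax : 2 ≤ pmax) (hn : 1 ≤ n)
    (γ : ℕ → ℝ) (hγ : ∀ p, 0 ≤ γ p)
    (Ω : Set ℂ) (hΩ : IsOpen Ω) (h0 : (0 : ℂ) ∈ Ω)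
    (R : ℝ) (hR : 0 < R) (hRΩ : Metric.closedBall (0 : ℂ) R ⊆ Ω)
    (ℓ : ℂ → ℂ) (hℓ : AnalyticOnNhd ℂ ℓ Ω) (hℓ0 : ℓ 0 = 0) :
    ∫ G, (∑ᶠ ω ∈ {ω : ℂ | ω ∈ Metric.ball (0 : ℂ) R ∧ Zpart pmax n γ G (ℓ ω) = 0},
          (vOrder (fun z => Zpart pmax n γ G (ℓ z)) ω : ℝ) * Real.log (R / ‖ω‖))
        ∂(disorder pmax n)
      ≤ (1 / 2) * ((2 * Real.pi)⁻¹ *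
          ∫ θ in (-Real.pi)..Real.pi,
            Real.log (Zcw pmax n γ (‖ℓ ((R : ℂ) * Complex.exp (θ * Complex.I))‖ ^ 2))) := by
  have hℓR : AnalyticOnNhd ℂ ℓ (Metric.closedBall 0 R) := hℓ.mono hRΩ
  have hZan : ∀ G, AnalyticOnNhd ℂ (fun z => Zpart pmax n γ G (ℓ z)) (Metric.closedBall 0 R) := by
    intro G z hz
    have hd : Differentiable ℂ (Zpart pmax n γ G) := by unfold Zpart; fun_prop
    exact (hd.analyticAt _).comp (hℓR z hz)
  have hZ0 : ∀ G, Zpart pmax n γ G (ℓ 0) = 1 := by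
    intro G
    simp [Zpart, hℓ0]
  have hb : Continuous fun θ => ℓ (circleMap 0 R θ) := by
    refine continuous_iff_continuousAt.2 fun θ => ?_
    exact ((hℓR _ (circleMap_mem_closedBall 0 hR.le θ)).continuousAt).comp
      (continuous_circleMap 0 R).continuousAt
  obtain ⟨hri, hr1⟩ := circleAverage_ratio pmax n hn γ hb
  set K := Real.circleAverage (fun z => Real.log (Zcw pmax n γ (‖ℓ z‖ ^ 2))) 0 R with hK
  rw [← circleAverage_eq_integral_neg_pi_pi
    (fun z => Real.log (Zcw pmax n γ (‖ℓ z‖ ^ 2))) R, ← hK]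
  calc _ ≤ ∫ G, (1 / 2) * (Real.circleAverage (fun z =>
          ‖Zpart pmax n γ G (ℓ z)‖ ^ 2 / secondMoment pmax n γ (ℓ z)) 0 R - 1 + K)
          ∂(disorder pmax n) := by
        refine integral_mono_of_nonneg (Filter.Eventually.of_forall fun G => ?_)
          (((hri.sub (integrable_const _)).add (integrable_const _)).const_mul _)
          (Filter.Eventually.of_forall fun G => ?_)
        · refine finsum_nonneg fun ω => finsum_nonneg fun hω => ?_
          refine mul_nonneg (Nat.cast_nonneg _) ?_
          rcases eq_or_ne ω 0 with rfl | hne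
          · simp
          · refine Real.log_nonneg ((one_le_div (norm_pos_iff.2 hne)).2 ?_)
            simpa using (mem_ball_zero_iff.1 hω.1).le
        · have h := finsum_zeros_eq_circleAverage hR (hZan G) (hZ0 G)
          refine h.trans_le ?_
          rw [hK, ← circleAverage_log_secondMoment pmax n γ hR hℓR hℓ0]
          exact circleAverage_log_norm_le hR (hZan G) (by rw [hZ0 G]; exact one_ne_zero)
            ((continuous_secondMoment pmax n γ).comp_continuousOn
              (hℓR.continuousOn.mono Metric.sphere_subset_closedBall))
            fun z => secondMoment_pos pmax n γ (ℓ z)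
    _ = (1 / 2) * K := by
        have hri' : Integrable (fun G => Real.circleAverage (fun z =>
            ‖Zpart pmax n γ G (ℓ z)‖ ^ 2 / secondMoment pmax n γ (ℓ z)) 0 R - 1)
            (disorder pmax n) := hri.sub (integrable_const _)
        rw [integral_const_mul, integral_add hri' (integrable_const _),
          integral_sub hri (integrable_const _), hr1]
        simp
end
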